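/- Subordination formula: for every t ∈ ℝ with t ≠ 0 and every μ ≥ 0, one has e^{-itμ²} = π^{-1/2} e^{-i(π/4)·sign(t)} |t|^{-1/2} ∫_0^∞ e^{i s²/(4t)} cos(sμ) ds, where the integral is understood as an improper (conditionally convergent) Riemann integral lim_{R→∞} ∫_0^R. -/

import Mathlib

open Complex Filter MeasureTheory intervalIntegral

/-!
For `0 < re b` the Fourier transform of the Gaussian gives
`∫_0^∞ e^{-bs²} cos(sμ) ds = (π/b)^{1/2} / 2 * e^{-μ²/(4b)}`. The phases `-bs² ± iμs` have
derivative of norm at least `2‖b‖s - |μ|`, so integrating by parts bounds the tail `∫_R^∞` by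
`2 / (2‖b‖R - |μ|)`, which involves `‖b‖` but not `re b`. Hence the estimate persists as `b`
tends to a nonzero point of the imaginary axis, and letting `R → ∞` there gives the formula for
`0 ≤ re b`, `b ≠ 0`. Subordination is the case `b = -i/(4t)`, where the principal root of
`π/b = 4πti` produces the factor `e^{i(π/4) sign t}`.
-/

section NonstationaryPhase

variable {φ φ' φ'' : ℝ → ℂ} {a b : ℝ}

lemma integral_cexp_eq_sub_add_integral
    (hφ : ∀ s ∈ Set.uIcc a b, HasDerivAt φ (φ' s) s)
    (hφ' : ∀ s ∈ Set.uIcc a b, HasDerivAt φ' (φ'' s) s)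
    (hφ'' : ContinuousOn φ'' (Set.uIcc a b)) (hne : ∀ s ∈ Set.uIcc a b, φ' s ≠ 0) :
    ∫ s in a..b, cexp (φ s) =
      cexp (φ b) / φ' b - cexp (φ a) / φ' a + ∫ s in a..b, cexp (φ s) * (φ'' s / φ' s ^ 2) := by
  have cont_φ : ContinuousOn φ (Set.uIcc a b) := HasDerivAt.continuousOn hφ
  have cont_φ' : ContinuousOn φ' (Set.uIcc a b) := HasDerivAt.continuousOn hφ'
  have by_parts := integral_mul_deriv_eq_deriv_mul
    (u := fun s => (φ' s)⁻¹) (v := fun s => cexp (φ s))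
    (fun s hs => (hφ' s hs).fun_inv (hne s hs)) (fun s hs => (hφ s hs).cexp)
    (hφ''.neg.div (cont_φ'.pow 2) fun s hs => pow_ne_zero 2 (hne s hs)).intervalIntegrable
    (cont_φ.cexp.mul cont_φ').intervalIntegrable
  have integrand_eq : ∫ s in a..b, cexp (φ s) = ∫ s in a..b, (φ' s)⁻¹ * (cexp (φ s) * φ' s) :=
    integral_congr fun s hs => by field_simp [hne s hs]
  have remainder_eq : ∫ s in a..b, cexp (φ s) * (φ'' s / φ' s ^ 2) =
      -∫ s in a..b, -φ'' s / φ' s ^ 2 * cexp (φ s) := by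
    rw [← intervalIntegral.integral_neg]
    exact integral_congr fun s _ => by ring
  rw [integrand_eq, by_parts, remainder_eq]
  ring

lemma integral_deriv_div_sq {m m' : ℝ → ℝ} (hm : ∀ s ∈ Set.uIcc a b, HasDerivAt m (m' s) s)
    (hm' : ContinuousOn m' (Set.uIcc a b)) (hne : ∀ s ∈ Set.uIcc a b, m s ≠ 0) :
    ∫ s in a..b, m' s / m s ^ 2 = 1 / m a - 1 / m b := by
  have cont : ContinuousOn (fun s => m' s / m s ^ 2) (Set.uIcc a b) :=
    hm'.div ((HasDerivAt.continuousOn hm).pow 2) fun s hs => pow_ne_zero 2 (hne s hs)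
  rw [integral_eq_sub_of_hasDerivAt (f := fun s => -(m s)⁻¹)
    (fun s hs => ((hm s hs).fun_inv (hne s hs)).fun_neg.congr_deriv (by ring))
    cont.intervalIntegrable]
  ring

lemma norm_integral_cexp_le_two_div {m m' : ℝ → ℝ} (hab : a ≤ b)
    (hφ : ∀ s ∈ Set.Icc a b, HasDerivAt φ (φ' s) s)
    (hφ' : ∀ s ∈ Set.Icc a b, HasDerivAt φ' (φ'' s) s) (hφ'' : ContinuousOn φ'' (Set.Icc a b))
    (hre : ∀ s ∈ Set.Icc a b, (φ s).re ≤ 0)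
    (hm : ∀ s ∈ Set.Icc a b, HasDerivAt m (m' s) s) (hm' : ContinuousOn m' (Set.Icc a b))
    (hpos : ∀ s ∈ Set.Icc a b, 0 < m s) (hmφ' : ∀ s ∈ Set.Icc a b, m s ≤ ‖φ' s‖)
    (hφ''m' : ∀ s ∈ Set.Icc a b, ‖φ'' s‖ ≤ m' s) :
    ‖∫ s in a..b, cexp (φ s)‖ ≤ 2 / m a := by
  have norm_exp_le : ∀ s ∈ Set.Icc a b, ‖cexp (φ s)‖ ≤ 1 := fun s hs => by
    rw [norm_exp]
    exact Real.exp_le_one_iff.2 (hre s hs)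
  have boundary_le : ∀ s ∈ Set.Icc a b, ‖cexp (φ s) / φ' s‖ ≤ 1 / m s := fun s hs => by
    rw [norm_div]
    exact div_le_div₀ zero_le_one (norm_exp_le s hs) (hpos s hs) (hmφ' s hs)
  have integrand_le : ∀ s ∈ Set.Icc a b,
      ‖cexp (φ s) * (φ'' s / φ' s ^ 2)‖ ≤ m' s / m s ^ 2 := fun s hs => by
    have m_pos := hpos s hs
    rw [norm_mul, norm_div, norm_pow]
    refine (mul_le_of_le_one_left (by positivity) (norm_exp_le s hs)).trans ?_
    exact div_le_div₀ ((norm_nonneg _).trans (hφ''m' s hs)) (hφ''m' s hs) (by positivity)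
      (pow_le_pow_left₀ m_pos.le (hmφ' s hs) 2)
  have remainder_le : ‖∫ s in a..b, cexp (φ s) * (φ'' s / φ' s ^ 2)‖ ≤ 1 / m a - 1 / m b := by
    rw [← Set.uIcc_of_le hab] at hm hm' hpos
    rw [← integral_deriv_div_sq hm hm' fun s hs => (hpos s hs).ne']
    refine norm_integral_le_of_norm_le hab
      (.of_forall fun s hs => integrand_le s (Set.Ioc_subset_Icc_self hs)) ?_
    exact (hm'.div ((HasDerivAt.continuousOn hm).pow 2)
      fun s hs => pow_ne_zero 2 (hpos s hs).ne').intervalIntegrable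
  have phase_ne : ∀ s ∈ Set.Icc a b, φ' s ≠ 0 := fun s hs =>
    norm_pos_iff.1 ((hpos s hs).trans_le (hmφ' s hs))
  rw [← Set.uIcc_of_le hab] at hφ hφ' hφ'' phase_ne
  rw [integral_cexp_eq_sub_add_integral hφ hφ' hφ'' phase_ne]
  calc ‖cexp (φ b) / φ' b - cexp (φ a) / φ' a + ∫ s in a..b, cexp (φ s) * (φ'' s / φ' s ^ 2)‖
      ≤ 1 / m b + 1 / m a + (1 / m a - 1 / m b) :=
        norm_add_le_of_le (norm_sub_le_of_le (boundary_le b (Set.right_mem_Icc.2 hab))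
          (boundary_le a (Set.left_mem_Icc.2 hab))) remainder_le
    _ = 2 / m a := by ring

end NonstationaryPhase

lemma integral_eq_two_nsmul_integral_Ioi_of_even {E : Type*} [NormedAddCommGroup E]
    [NormedSpace ℝ E] {f : ℝ → E} (hf : Integrable f) (heven : ∀ x, f (-x) = f x) :
    ∫ x, f x = 2 • ∫ x in Set.Ioi 0, f x := by
  have reflect : ∫ x in Set.Iic 0, f x = ∫ x in Set.Ioi 0, f x := by
    simpa only [heven, neg_zero] using (integral_comp_neg_Ioi 0 f).symm
  rw [← integral_Iic_add_Ioi hf.integrableOn hf.integrableOn, reflect, two_nsmul]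

lemma cexp_mul_cos_eq_half_add (w z : ℂ) :
    cexp w * cos z = (cexp (w + I * z) + cexp (w + -I * z)) / 2 := by
  rw [cos, exp_add, exp_add, mul_comm z I, neg_mul, neg_mul, mul_comm z I]
  ring

section GaussianCosine

variable {b : ℂ}

lemma norm_integral_cexp_quadratic_le {c : ℂ} (hb : 0 ≤ b.re) (hc : c.re ≤ 0) {R S : ℝ}
    (hR : ‖c‖ < 2 * ‖b‖ * R) (hRS : R ≤ S) :
    ‖∫ s in R..S, cexp (-b * s ^ 2 + c * s)‖ ≤ 2 / (2 * ‖b‖ * R - ‖c‖) := by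
  have R_pos : 0 < R := pos_of_mul_pos_right ((norm_nonneg c).trans_lt hR) (by positivity)
  have s_nonneg : ∀ s ∈ Set.Icc R S, 0 ≤ s := fun s hs => R_pos.le.trans hs.1
  have hasDerivAt_phase (s : ℝ) :
      HasDerivAt (fun s : ℝ => -b * (s : ℂ) ^ 2 + c * s) (-2 * b * s + c) s :=
    ((((hasDerivAt_id (s : ℂ)).pow 2).const_mul (-b)).add
      ((hasDerivAt_id (s : ℂ)).const_mul c)).congr_deriv
        (by simp only [id, Nat.cast_ofNat]; ring) |>.comp_ofReal
  have hasDerivAt_phase' (s : ℝ) : HasDerivAt (fun s : ℝ => -2 * b * (s : ℂ) + c) (-2 * b) s :=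
    (((hasDerivAt_id (s : ℂ)).const_mul (-2 * b)).add_const c).congr_deriv (mul_one _)
      |>.comp_ofReal
  have hasDerivAt_bound (s : ℝ) : HasDerivAt (fun s : ℝ => 2 * ‖b‖ * s - ‖c‖) (2 * ‖b‖) s :=
    (((hasDerivAt_id s).const_mul (2 * ‖b‖)).sub_const ‖c‖).congr_deriv (mul_one _)
  have phase_re_nonpos : ∀ s ∈ Set.Icc R S, (-b * (s : ℂ) ^ 2 + c * s).re ≤ 0 := fun s hs => by
    rw [← ofReal_pow, add_re, re_mul_ofReal, re_mul_ofReal, neg_re]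
    nlinarith [mul_nonneg hb (sq_nonneg s), mul_nonneg (neg_nonneg.2 hc) (s_nonneg s hs)]
  have bound_pos : ∀ s ∈ Set.Icc R S, 0 < 2 * ‖b‖ * s - ‖c‖ := fun s hs =>
    sub_pos.2 (hR.trans_le (mul_le_mul_of_nonneg_left hs.1 (by positivity)))
  have bound_le : ∀ s ∈ Set.Icc R S, 2 * ‖b‖ * s - ‖c‖ ≤ ‖-2 * b * (s : ℂ) + c‖ := fun s hs =>
    calc 2 * ‖b‖ * s - ‖c‖ = ‖-2 * b * (s : ℂ)‖ - ‖c‖ := by simp [abs_of_nonneg (s_nonneg s hs)]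
      _ ≤ ‖-2 * b * (s : ℂ) + c‖ := norm_sub_le_norm_add _ _
  exact norm_integral_cexp_le_two_div hRS (fun s _ => hasDerivAt_phase s)
    (fun s _ => hasDerivAt_phase' s) continuousOn_const phase_re_nonpos
    (fun s _ => hasDerivAt_bound s) continuousOn_const bound_pos bound_le (fun _ _ => by simp)

lemma norm_integral_gaussian_mul_cos_le (hb : 0 ≤ b.re) {μ R S : ℝ}
    (hR : |μ| < 2 * ‖b‖ * R) (hRS : R ≤ S) :
    ‖∫ s in R..S, cexp (-b * s ^ 2) * cos (s * μ)‖ ≤ 2 / (2 * ‖b‖ * R - |μ|) := by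
  have tail_le : ∀ c : ℂ, c.re = 0 → ‖c‖ = |μ| →
      ‖∫ s in R..S, cexp (-b * s ^ 2 + c * s)‖ ≤ 2 / (2 * ‖b‖ * R - |μ|) := fun c hre hc => by
    rw [← hc] at hR ⊢
    exact norm_integral_cexp_quadratic_le hb hre.le hR hRS
  have integrand_eq (s : ℝ) : cexp (-b * s ^ 2) * cos (s * μ) =
      (cexp (-b * s ^ 2 + I * μ * s) + cexp (-b * s ^ 2 + -I * μ * s)) / 2 := by
    rw [cexp_mul_cos_eq_half_add]
    ring_nf
  simp_rw [integrand_eq]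
  rw [intervalIntegral.integral_div, integral_add
    (Continuous.intervalIntegrable (by fun_prop) _ _)
    (Continuous.intervalIntegrable (by fun_prop) _ _), norm_div, Complex.norm_ofNat]
  linarith [norm_add_le_of_le (tail_le (I * μ) (by simp) (by simp))
    (tail_le (-I * μ) (by simp) (by simp))]

lemma gaussian_mul_cos_eq_half_add (b z : ℂ) (s : ℝ) : cexp (-b * s ^ 2) * cos (s * z) =
    (cexp (I * z * s) * cexp (-b * s ^ 2) + cexp (I * -z * s) * cexp (-b * s ^ 2)) / 2 := by
  rw [cexp_mul_cos_eq_half_add, ← exp_add, ← exp_add]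
  ring_nf

lemma integrable_cexp_mul_gaussian (hb : 0 < b.re) (z : ℂ) :
    Integrable fun s : ℝ => cexp (I * z * s) * cexp (-b * s ^ 2) := by
  simpa only [add_zero, add_comm, exp_add, exp_zero, one_mul] using
    integrable_cexp_quadratic hb (I * z) 0

lemma integrable_gaussian_mul_cos (hb : 0 < b.re) (z : ℂ) :
    Integrable fun s : ℝ => cexp (-b * s ^ 2) * cos (s * z) := by
  simp_rw [gaussian_mul_cos_eq_half_add]
  exact ((integrable_cexp_mul_gaussian hb z).add (integrable_cexp_mul_gaussian hb (-z))).div_const 2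

lemma integral_gaussian_mul_cos (hb : 0 < b.re) (z : ℂ) :
    ∫ s : ℝ, cexp (-b * s ^ 2) * cos (s * z) =
      (Real.pi / b) ^ (1 / 2 : ℂ) * cexp (-z ^ 2 / (4 * b)) := by
  simp_rw [gaussian_mul_cos_eq_half_add]
  rw [MeasureTheory.integral_div, MeasureTheory.integral_add (integrable_cexp_mul_gaussian hb z)
    (integrable_cexp_mul_gaussian hb (-z)), fourierIntegral_gaussian hb,
    fourierIntegral_gaussian hb, neg_sq]
  ring

lemma integral_Ioi_gaussian_mul_cos (hb : 0 < b.re) (z : ℂ) :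
    ∫ s in Set.Ioi (0 : ℝ), cexp (-b * s ^ 2) * cos (s * z) =
      (Real.pi / b) ^ (1 / 2 : ℂ) / 2 * cexp (-z ^ 2 / (4 * b)) := by
  have half := integral_eq_two_nsmul_integral_Ioi_of_even (integrable_gaussian_mul_cos hb z)
    (by simp)
  rw [integral_gaussian_mul_cos hb, nsmul_eq_mul, Nat.cast_ofNat] at half
  linear_combination -half / 2

lemma norm_gaussian_mul_cos_sub_integral_le_of_re_pos (hb : 0 < b.re) {μ R : ℝ}
    (hR : |μ| < 2 * ‖b‖ * R) :
    ‖(Real.pi / b) ^ (1 / 2 : ℂ) / 2 * cexp (-μ ^ 2 / (4 * b)) -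
      ∫ s in (0 : ℝ)..R, cexp (-b * s ^ 2) * cos (s * μ)‖ ≤ 2 / (2 * ‖b‖ * R - |μ|) := by
  have integrable_integrand := integrable_gaussian_mul_cos hb μ
  have tendsto_half_line :=
    intervalIntegral_tendsto_integral_Ioi 0 integrable_integrand.integrableOn tendsto_id
  rw [integral_Ioi_gaussian_mul_cos hb] at tendsto_half_line
  refine le_of_tendsto (tendsto_half_line.sub_const _).norm ?_
  filter_upwards [eventually_ge_atTop R] with S hRS
  rw [id, integral_interval_sub_left integrable_integrand.intervalIntegrable
    integrable_integrand.intervalIntegrable]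
  exact norm_integral_gaussian_mul_cos_le hb.le hR hRS

lemma ofReal_div_mem_slitPlane {r : ℝ} (hr : 0 < r) (hb : 0 ≤ b.re) (hb0 : b ≠ 0) :
    (r : ℂ) / b ∈ slitPlane := by
  have normSq_pos : 0 < normSq b := normSq_pos.2 hb0
  simp only [mem_slitPlane_iff, div_re, div_im, ofReal_re, ofReal_im, zero_mul, zero_div,
    add_zero, zero_sub]
  rcases hb.lt_or_eq with re_pos | re_zero
  · exact .inl (by positivity)
  · have im_ne : b.im ≠ 0 := fun im_zero => hb0 (Complex.ext re_zero.symm im_zero)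
    exact .inr (neg_ne_zero.2 (by positivity))

lemma norm_gaussian_mul_cos_sub_integral_le (hb : 0 ≤ b.re) {μ R : ℝ}
    (hR : |μ| < 2 * ‖b‖ * R) :
    ‖(Real.pi / b) ^ (1 / 2 : ℂ) / 2 * cexp (-μ ^ 2 / (4 * b)) -
      ∫ s in (0 : ℝ)..R, cexp (-b * s ^ 2) * cos (s * μ)‖ ≤ 2 / (2 * ‖b‖ * R - |μ|) := by
  have b_ne : b ≠ 0 := by
    rintro rfl
    simp [(abs_nonneg μ).not_gt] at hR
  have cont_error : ContinuousAt (fun b : ℂ =>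
      ‖(Real.pi / b) ^ (1 / 2 : ℂ) / 2 * cexp (-μ ^ 2 / (4 * b)) -
        ∫ s in (0 : ℝ)..R, cexp (-b * s ^ 2) * cos (s * μ)‖) b := by
    refine (((ContinuousAt.cpow (by fun_prop (disch := assumption)) continuousAt_const
      (ofReal_div_mem_slitPlane Real.pi_pos hb b_ne)).div_const 2).mul
      (by fun_prop (disch := simpa))).sub (Continuous.continuousAt ?_) |>.norm
    exact continuous_parametric_intervalIntegral_of_continuous' (by fun_prop) 0 R
  have cont_bound : ContinuousAt (fun b : ℂ => 2 / (2 * ‖b‖ * R - |μ|)) b :=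
    continuousAt_const.div (by fun_prop) (sub_pos.2 hR).ne'
  have : (nhdsWithin b {z : ℂ | 0 < z.re}).NeBot := by
    rw [← mem_closure_iff_nhdsWithin_neBot, closure_setOfPred_lt_re]
    exact hb
  refine le_of_tendsto_of_tendsto (b := nhdsWithin b {z : ℂ | 0 < z.re})
    (cont_error.mono_left nhdsWithin_le_nhds) (cont_bound.mono_left nhdsWithin_le_nhds) ?_
  have near : ∀ᶠ b' : ℂ in nhds b, |μ| < 2 * ‖b'‖ * R :=
    ContinuousAt.eventually_lt continuousAt_const (by fun_prop) hR
  filter_upwards [self_mem_nhdsWithin, nhdsWithin_le_nhds near] with b' re_pos hR'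
  exact norm_gaussian_mul_cos_sub_integral_le_of_re_pos re_pos hR'

lemma tendsto_integral_gaussian_mul_cos (hb : 0 ≤ b.re) (hb0 : b ≠ 0) (μ : ℝ) :
    Tendsto (fun R : ℝ => ∫ s in (0 : ℝ)..R, cexp (-b * s ^ 2) * cos (s * μ)) atTop
      (nhds ((Real.pi / b) ^ (1 / 2 : ℂ) / 2 * cexp (-μ ^ 2 / (4 * b)))) := by
  have linear_atTop : Tendsto (fun R : ℝ => 2 * ‖b‖ * R) atTop atTop :=
    tendsto_id.const_mul_atTop (by positivity)
  have bound_tendsto : Tendsto (fun R : ℝ => 2 / (2 * ‖b‖ * R - |μ|)) atTop (nhds 0) :=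
    (tendsto_atTop_add_const_right _ _ linear_atTop).const_div_atTop 2
  rw [tendsto_iff_norm_sub_tendsto_zero]
  refine squeeze_zero' (.of_forall fun _ => norm_nonneg _) ?_ bound_tendsto
  filter_upwards [linear_atTop.eventually_gt_atTop |μ|] with R hR
  rw [norm_sub_rev]
  exact norm_gaussian_mul_cos_sub_integral_le hb hR

end GaussianCosine

lemma arg_ofReal_mul_I (t : ℝ) : arg (t * I) = Real.pi / 2 * Real.sign t := by
  rcases lt_trichotomy t 0 with neg | rfl | pos
  · rw [← neg_mul_neg, ← ofReal_neg, arg_real_mul _ (neg_pos.2 neg), arg_neg_I,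
      Real.sign_of_neg neg, mul_neg_one]
  · simp
  · rw [arg_real_mul _ pos, arg_I, Real.sign_of_pos pos, mul_one]

lemma ofReal_mul_I_cpow_half (t : ℝ) :
    (t * I) ^ (1 / 2 : ℂ) = √|t| * cexp (I * (Real.pi / 4 : ℝ) * (Real.sign t : ℝ)) := by
  rw [show (1 / 2 : ℂ) = (1 / 2 : ℝ) by norm_num, cpow_ofReal, arg_ofReal_mul_I, norm_mul, norm_I,
    mul_one, norm_real, Real.norm_eq_abs, ← Real.sqrt_eq_rpow, ofReal_cos, ofReal_sin, ← exp_mul_I]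
  push_cast
  ring_nf

lemma pi_div_neg_I_div_cpow_half {t : ℝ} (ht : t ≠ 0) :
    (Real.pi / (-I / (4 * t))) ^ (1 / 2 : ℂ) =
      2 * √Real.pi * √|t| * cexp (I * (Real.pi / 4 : ℝ) * (Real.sign t : ℝ)) := by
  have quotient_eq : Real.pi / (-I / (4 * t)) = ((2 ^ 2 * Real.pi * t : ℝ) : ℂ) * I := by
    have t_ne : (t : ℂ) ≠ 0 := ofReal_ne_zero.2 ht
    push_cast
    field_simp
    linear_combination (-4 : ℂ) * I_sq
  have coeff_pos : 0 < 2 ^ 2 * Real.pi := by positivity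
  have sign_eq : Real.sign (2 ^ 2 * Real.pi * t) = Real.sign t := by
    rcases ht.lt_or_gt with neg | pos
    · rw [Real.sign_of_neg neg, Real.sign_of_neg (mul_neg_of_pos_of_neg coeff_pos neg)]
    · rw [Real.sign_of_pos pos, Real.sign_of_pos (mul_pos coeff_pos pos)]
  have sqrt_eq : √|2 ^ 2 * Real.pi * t| = 2 * √Real.pi * √|t| := by
    rw [abs_mul, abs_of_pos coeff_pos, Real.sqrt_mul coeff_pos.le, Real.sqrt_mul (by positivity),
      Real.sqrt_sq zero_le_two]
  rw [quotient_eq, ofReal_mul_I_cpow_half, sign_eq, sqrt_eq]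
  push_cast
  rfl

theorem subordination_formula_general (t : ℝ) (ht : t ≠ 0) (μ : ℝ) :
    Tendsto
      (fun R : ℝ =>
        (((Real.sqrt Real.pi)⁻¹ : ℝ) : ℂ) *
          Complex.exp (-Complex.I * ((Real.pi / 4 : ℝ) : ℂ) * ((Real.sign t : ℝ) : ℂ)) *
          (((Real.sqrt |t|)⁻¹ : ℝ) : ℂ) *
          ∫ s in (0:ℝ)..R,
            Complex.exp (Complex.I * (s : ℂ) ^ 2 / (4 * (t : ℂ))) * ((Real.cos (s * μ) : ℝ) : ℂ))
      atTop
      (nhds (Complex.exp (-Complex.I * (t : ℂ) * ((μ : ℂ)) ^ 2))) := by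
  have fresnel := tendsto_integral_gaussian_mul_cos (b := -I / (4 * t))
    (by simp [div_re]) (by simp [ht]) μ
  have quadratic_phase (s : ℝ) : -(-I / (4 * t)) * s ^ 2 = I * s ^ 2 / (4 * t) := by ring
  have limit_phase : -(μ : ℂ) ^ 2 / (4 * (-I / (4 * t))) = -I * t * μ ^ 2 := by
    field_simp
    simp
  have normalization : ((√Real.pi)⁻¹ : ℝ) * cexp (-I * (Real.pi / 4 : ℝ) * (Real.sign t : ℝ)) *
      ((√|t|)⁻¹ : ℝ) * ((Real.pi / (-I / (4 * t))) ^ (1 / 2 : ℂ) / 2) = 1 := by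
    have sqrt_pi_ne : (√Real.pi : ℂ) ≠ 0 := ofReal_ne_zero.2 (by positivity)
    have sqrt_abs_ne : (√|t| : ℂ) ≠ 0 := ofReal_ne_zero.2 (by positivity)
    rw [pi_div_neg_I_div_cpow_half ht, neg_mul, neg_mul, exp_neg, ofReal_inv, ofReal_inv]
    field_simp
  rw [← one_mul (cexp (-I * t * μ ^ 2)), ← normalization, mul_assoc _ (_ / 2)]
  simpa only [quadratic_phase, limit_phase, ofReal_cos, ofReal_mul] using fresnel.const_mul _

/-- Subordination formula: for `t ≠ 0` and `μ ≥ 0`,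
`e^{-itμ²} = π^{-1/2} e^{-i(π/4)sign t} |t|^{-1/2} ∫_0^∞ e^{is²/(4t)} cos(sμ) ds`,
the integral being an improper one, `lim_{R→∞} ∫_0^R`. -/
theorem subordination_formula (t : ℝ) (ht : t ≠ 0) (μ : ℝ) (hμ : 0 ≤ μ) :
    Tendsto
      (fun R : ℝ =>
        (((Real.sqrt Real.pi)⁻¹ : ℝ) : ℂ) *
          Complex.exp (-Complex.I * ((Real.pi / 4 : ℝ) : ℂ) * ((Real.sign t : ℝ) : ℂ)) *
          (((Real.sqrt |t|)⁻¹ : ℝ) : ℂ) *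
          ∫ s in (0:ℝ)..R,
            Complex.exp (Complex.I * (s : ℂ) ^ 2 / (4 * (t : ℂ))) * ((Real.cos (s * μ) : ℝ) : ℂ))
      atTop
      (nhds (Complex.exp (-Complex.I * (t : ℂ) * ((μ : ℂ)) ^ 2))) :=
  subordination_formula_general t ht μ
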